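/- Let ħ > 0, let N be an integer, let t : ℂ → ℂ, and let c₊, c₋ : ℂ → ℂ satisfy t(γ)·c(γ) = i^{−N}·c(γ+iħ) + i^{N}·c(γ−iħ) for all γ ∈ ℂ. Define W(γ) = c₊(γ)·c₋(γ+iħ) − c₊(γ+iħ)·c₋(γ). Suppose W(δ) = 0 for some δ ∈ ℂ. Then W(δ + iħn) = 0 for every integer n; moreover, if in addition c₋(δ + iħn) ≠ 0 for every integer n, then the ratio c₊(δ+iħn)/c₋(δ+iħn) is independent of n ∈ ℤ, i.e. c₊(δ+iħn)/c₋(δ+iħn) = c₊(δ)/c₋(δ) for all n ∈ ℤ. -/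

import Mathlib

/-- The Wronskian (wr1) of two solutions of the Baxter equation. -/
noncomputable def baxterWronskian (hbar : ℝ) (cp cm : ℂ → ℂ) (γ : ℂ) : ℂ :=
  cp γ * cm (γ + Complex.I * (hbar : ℂ)) - cp (γ + Complex.I * (hbar : ℂ)) * cm γ

section Ring

variable {G R : Type*} [AddGroup G] [CommRing R] {ω x : G} {a b t f g : G → R}

/-- The Casoratian (discrete Wronskian) of `f` and `g` for the shift `ω`; `baxterWronskian` is the
case `ω = iħ`. -/
def casoratian (ω : G) (f g : G → R) (x : G) : R :=
  f x * g (x + ω) - f (x + ω) * g x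

/-- The Baxter equation for the shift `ω`, with transfer function `t` and with coefficients `a`, `b`
that may depend on the point; (fb2) is the case `ω = iħ`, `a = i ^ (-N)`, `b = i ^ N`. -/
def IsBaxterSolution (ω : G) (a b t c : G → R) : Prop :=
  ∀ x, t x * c x = a x * c (x + ω) + b x * c (x - ω)

namespace IsBaxterSolution

theorem mul_casoratian_add (hf : IsBaxterSolution ω a b t f) (hg : IsBaxterSolution ω a b t g)
    (x : G) : a (x + ω) * casoratian ω f g (x + ω) = b (x + ω) * casoratian ω f g x := by
  have hfx := hf (x + ω)
  have hgx := hg (x + ω)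
  rw [add_sub_cancel_right] at hfx hgx
  unfold casoratian
  -- Cross-multiplying the two equations at `x + ω` and subtracting eliminates `t`.
  linear_combination g (x + ω) * hfx - f (x + ω) * hgx

theorem casoratian_add_eq_zero_iff [NoZeroDivisors R] (hf : IsBaxterSolution ω a b t f)
    (hg : IsBaxterSolution ω a b t g) (ha : a (x + ω) ≠ 0) (hb : b (x + ω) ≠ 0) :
    casoratian ω f g (x + ω) = 0 ↔ casoratian ω f g x = 0 := by
  rw [← mul_eq_zero_iff_left ha, hf.mul_casoratian_add hg, mul_eq_zero_iff_left hb]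

theorem casoratian_add_zsmul_eq_zero [NoZeroDivisors R] (hf : IsBaxterSolution ω a b t f)
    (hg : IsBaxterSolution ω a b t g) (ha : ∀ x, a x ≠ 0) (hb : ∀ x, b x ≠ 0)
    (hx : casoratian ω f g x = 0) (n : ℤ) : casoratian ω f g (x + n • ω) = 0 := by
  have vanishing_periodic : Function.Periodic (fun y ↦ casoratian ω f g y = 0) ω :=
    fun y ↦ propext (hf.casoratian_add_eq_zero_iff hg (ha (y + ω)) (hb (y + ω)))
  exact (vanishing_periodic.zsmul n x).mpr hx

end IsBaxterSolution

end Ring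

section Field

variable {G K : Type*} [AddGroup G] [Field K] {ω x : G} {f g : G → K}

theorem casoratian_eq_zero_iff_div_eq_div (hx : g x ≠ 0) (hxω : g (x + ω) ≠ 0) :
    casoratian ω f g x = 0 ↔ f (x + ω) / g (x + ω) = f x / g x := by
  rw [div_eq_div_iff hxω hx, casoratian, sub_eq_zero, eq_comm]

theorem div_add_zsmul_eq_div (hW : ∀ n : ℤ, casoratian ω f g (x + n • ω) = 0)
    (hg : ∀ n : ℤ, g (x + n • ω) ≠ 0) (n : ℤ) :
    f (x + n • ω) / g (x + n • ω) = f x / g x := by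
  have add_one_zsmul_eq (k : ℤ) : x + (k + 1) • ω = x + k • ω + ω := by
    rw [add_one_zsmul, add_assoc]
  have ratio_periodic : Function.Periodic (fun k : ℤ ↦ f (x + k • ω) / g (x + k • ω)) 1 := by
    intro k
    have hgk := hg (k + 1)
    simp only [add_one_zsmul_eq] at hgk ⊢
    exact (casoratian_eq_zero_iff_div_eq_div (hg k) hgk).mp (hW k)
  simpa using ratio_periodic.zsmul_eq n

theorem baxterWronskian_lattice_zero_general {a b t : G → K} (ha : ∀ x, a x ≠ 0)
    (hb : ∀ x, b x ≠ 0) (hf : IsBaxterSolution ω a b t f) (hg : IsBaxterSolution ω a b t g)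
    (hx : casoratian ω f g x = 0) :
    (∀ n : ℤ, casoratian ω f g (x + n • ω) = 0) ∧
      ((∀ n : ℤ, g (x + n • ω) ≠ 0) →
        ∀ n : ℤ, f (x + n • ω) / g (x + n • ω) = f x / g x) :=
  have hW := hf.casoratian_add_zsmul_eq_zero hg ha hb hx
  ⟨hW, div_add_zsmul_eq_div hW⟩

end Field

/-- Vanishing of the Wronskian at one point `δ` propagates to the whole lattice
`δ + iħℤ`, making the constant `ξ = c₊/c₋` of the quantization condition (q1)
well defined along it. -/
theorem baxterWronskian_lattice_zero (hbar : ℝ) (hhbar : 0 < hbar) (N : ℤ)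
    (t cp cm : ℂ → ℂ)
    (hp : ∀ γ : ℂ, t γ * cp γ =
      Complex.I ^ (-N) * cp (γ + Complex.I * (hbar : ℂ)) +
      Complex.I ^ N * cp (γ - Complex.I * (hbar : ℂ)))
    (hm : ∀ γ : ℂ, t γ * cm γ =
      Complex.I ^ (-N) * cm (γ + Complex.I * (hbar : ℂ)) +
      Complex.I ^ N * cm (γ - Complex.I * (hbar : ℂ)))
    (δ : ℂ) (hδ : baxterWronskian hbar cp cm δ = 0) :
    (∀ n : ℤ, baxterWronskian hbar cp cm (δ + Complex.I * (hbar : ℂ) * (n : ℂ)) = 0) ∧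
    ((∀ n : ℤ, cm (δ + Complex.I * (hbar : ℂ) * (n : ℂ)) ≠ 0) →
      ∀ n : ℤ, cp (δ + Complex.I * (hbar : ℂ) * (n : ℂ)) /
          cm (δ + Complex.I * (hbar : ℂ) * (n : ℂ)) = cp δ / cm δ) := by
  have I_zpow_ne_zero (k : ℤ) : Complex.I ^ k ≠ 0 := zpow_ne_zero k Complex.I_ne_zero
  simp only [← zsmul_eq_mul']
  exact baxterWronskian_lattice_zero_general (fun _ ↦ I_zpow_ne_zero (-N))
    (fun _ ↦ I_zpow_ne_zero N) hp hm hδ
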